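/- Let k be a field, A = k[x₁,…,xₙ] a polynomial ring, and 𝔭 a prime ideal of A with residue field k(𝔭). Then k(𝔭) is formally smooth over k if and only if 𝔭 equals the intersection of all maximal ideals 𝔪 of A containing 𝔭 whose residue field k(𝔪) is separable over k. -/

import Mathlib

/-!
Call a maximal ideal of a `k`-algebra with residue field separable over `k` a *separable point*.
For `B = A/𝔭` with fraction field `κ`, the right-hand side says that an element of `B` vanishing at
all separable points is zero.

If `κ` is formally smooth over `k`, then `B` is smooth over `k` at its generic point, so some
localization `B_f` is étale over a polynomial ring. Affine space has enough separable points since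
the separable closure of `k` is infinite. This passes to `B_f`: the image in affine space of the
locus `b ≠ 0` is open, so it contains a separable point, and the points of `B_f` above that one are
again separable, the fibre being unramified.

Conversely, if `B` embeds into a product of separable extensions of `k`, then `B`, and hence its
localization `κ`, is geometrically reduced over `k`. In characteristic `p`, the Frobenius of
`k̄ ⊗ κ` is then injective, so the `p`-th power map of `κ` preserves linear independence over
`k`. By MacLane's criterion `κ` has a separating transcendence basis over `k`.
-/

universe u

open scoped TensorProduct

section SeparableJacobson

variable {k A B L : Type*} [Field k] [CommRing A] [CommRing B] [CommRing L]
  [Algebra k A] [Algebra k B] [Algebra k L]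

variable (k) in
/-- The intersection of the maximal ideals containing `I` whose residue field is separable over the
base field `k`: the analogue of `Ideal.jacobson` that only takes separable points into account.
It is `⊤` if there are none. -/
def separableJacobson (I : Ideal A) : Ideal A :=
  sInf {m : Ideal A | m.IsMaximal ∧ I ≤ m ∧ Algebra.IsSeparable k (A ⧸ m)}

theorem isMaximal_ker_of_isIntegral [IsDomain L] [Algebra.IsIntegral k L] (φ : A →ₐ[k] L) :
    (RingHom.ker φ).IsMaximal := by
  have : (RingHom.ker φ).IsPrime := RingHom.ker_isPrime φ
  have : Algebra.IsIntegral k (A ⧸ RingHom.ker φ) :=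
    .of_injective (Ideal.kerLiftAlg φ) (Ideal.kerLiftAlg_injective φ)
  exact Ideal.Quotient.maximal_of_isField _ (isField_of_isIntegral_of_isField' (Field.toIsField k))

theorem isSeparable_quotient_ker [Algebra.IsSeparable k L] (φ : A →ₐ[k] L) :
    Algebra.IsSeparable k (A ⧸ RingHom.ker φ) :=
  ⟨fun _ => (isSeparable_map_iff (Ideal.kerLiftAlg φ) (Ideal.kerLiftAlg_injective φ)).mp
    (Algebra.IsSeparable.isSeparable k _)⟩

theorem separableJacobson_le_ker [IsDomain L] [Algebra.IsSeparable k L] (φ : A →ₐ[k] L)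
    {I : Ideal A} (hI : I ≤ RingHom.ker φ) : separableJacobson k I ≤ RingHom.ker φ :=
  have : Algebra.IsIntegral k L := ⟨Algebra.IsSeparable.isIntegral k⟩
  sInf_le ⟨isMaximal_ker_of_isIntegral φ, hI, isSeparable_quotient_ker φ⟩

theorem separableJacobson_le_comap (φ : A →ₐ[k] B) {I : Ideal A} {J : Ideal B}
    (h : I ≤ Ideal.comap φ J) : separableJacobson k I ≤ Ideal.comap φ (separableJacobson k J) := by
  refine fun a ha => Ideal.mem_comap.mpr (Submodule.mem_sInf.mpr ?_)
  rintro m ⟨hm, hJm, _⟩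
  have hker : RingHom.ker ((Ideal.Quotient.mkₐ k m).comp φ) = Ideal.comap φ m := by
    ext x
    simp [RingHom.mem_ker, Ideal.Quotient.eq_zero_iff_mem]
  have hmem := separableJacobson_le_ker ((Ideal.Quotient.mkₐ k m).comp φ)
    (hker ▸ h.trans (Ideal.comap_mono hJm)) ha
  rwa [hker] at hmem

theorem separableJacobson_bot_eq_bot_of_injective (φ : A →ₐ[k] B) (hφ : Function.Injective φ)
    (hB : separableJacobson k (⊥ : Ideal B) = ⊥) : separableJacobson k (⊥ : Ideal A) = ⊥ := by
  have hle := separableJacobson_le_comap φ (bot_le : (⊥ : Ideal A) ≤ (⊥ : Ideal B).comap φ)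
  rwa [hB, ← RingHom.ker_eq_comap_bot, (RingHom.injective_iff_ker_eq_bot φ).mp hφ,
    le_bot_iff] at hle

theorem comap_mk_separableJacobson_bot (I : Ideal A) :
    Ideal.comap (Ideal.Quotient.mk I) (separableJacobson k (⊥ : Ideal (A ⧸ I))) =
      separableJacobson k I := by
  refine le_antisymm (fun a ha => Submodule.mem_sInf.mpr ?_) ?_
  · rintro m ⟨hm, hIm, _⟩
    exact Ideal.Quotient.eq_zero_iff_mem.mp <|
      separableJacobson_le_ker (Ideal.Quotient.factorₐ k hIm) bot_le (Ideal.mem_comap.mp ha)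
  · exact separableJacobson_le_comap (Ideal.Quotient.mkₐ k I)
      ((Ideal.Quotient.mkₐ_ker k I).ge.trans (RingHom.ker_eq_comap_bot _).le)

theorem eq_separableJacobson_iff (I : Ideal A) :
    I = separableJacobson k I ↔ separableJacobson k (⊥ : Ideal (A ⧸ I)) = ⊥ := by
  rw [← (Ideal.comap_injective_of_surjective _ Ideal.Quotient.mk_surjective).eq_iff,
    comap_mk_separableJacobson_bot, ← RingHom.ker_eq_comap_bot, Ideal.mk_ker, eq_comm]

end SeparableJacobson

section Smooth

variable {k R B C : Type*} [Field k] [CommRing R] [CommRing B] [CommRing C]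
  [Algebra k R] [Algebra k B] [Algebra k C] [Algebra R C] [IsScalarTower k R C]

theorem infinite_of_isSepClosed (K : Type*) [Field K] [IsSepClosed K] : Infinite K := by
  by_contra! _
  have : IsAlgClosed K := inferInstance
  exact not_finite K

theorem separableJacobson_bot_mvPolynomial (σ : Type*) :
    separableJacobson k (⊥ : Ideal (MvPolynomial σ k)) = ⊥ := by
  refine (Submodule.eq_bot_iff _).mpr fun f hf => ?_
  have : Infinite (SeparableClosure k) := infinite_of_isSepClosed _
  refine MvPolynomial.map_injective (algebraMap k (SeparableClosure k))
    (algebraMap k (SeparableClosure k)).injective (MvPolynomial.funext fun x => ?_)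
  have hfx : MvPolynomial.aeval x f = 0 :=
    separableJacobson_le_ker (MvPolynomial.aeval x) bot_le hf
  simpa [MvPolynomial.aeval_def, MvPolynomial.eval_map] using hfx

theorem isMaximal_and_isSeparable_quotient_of_liesOver [Algebra.FiniteType R C]
    [Algebra.FormallyUnramified R C] (m : Ideal R) [m.IsMaximal] [Algebra.IsSeparable k (R ⧸ m)]
    (q : Ideal C) [q.IsPrime] [q.LiesOver m] :
    q.IsMaximal ∧ Algebra.IsSeparable k (C ⧸ q) := by
  let := Ideal.Quotient.field m
  have : Algebra.FormallyUnramified C (C ⧸ q) :=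
    .of_surjective (Algebra.ofId C (C ⧸ q)) Ideal.Quotient.mk_surjective
  have : Algebra.FormallyUnramified R (C ⧸ q) := .comp R C (C ⧸ q)
  have : Algebra.FormallyUnramified (R ⧸ m) (C ⧸ q) := .of_restrictScalars R _ _
  have : Algebra.FiniteType (R ⧸ m) (C ⧸ q) := .of_restrictScalars_finiteType R _ _
  have : Module.Finite (R ⧸ m) (C ⧸ q) := Algebra.FormallyUnramified.finite_of_free _ _
  have hq : q.IsMaximal := Ideal.Quotient.maximal_of_isField q
    (isField_of_isIntegral_of_isField' (Field.toIsField (R ⧸ m)))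
  let := Ideal.Quotient.field q
  have : Algebra.IsSeparable (R ⧸ m) (C ⧸ q) := Algebra.FormallyUnramified.isSeparable _ _
  exact ⟨hq, Algebra.IsSeparable.trans k (R ⧸ m) (C ⧸ q)⟩

theorem separableJacobson_bot_eq_bot_of_etale [Algebra.Etale R C] [IsReduced C]
    (hR : separableJacobson k (⊥ : Ideal R) = ⊥) : separableJacobson k (⊥ : Ideal C) = ⊥ := by
  refine (Submodule.eq_bot_iff _).mpr fun c hc => by_contra fun hc0 => ?_
  have hopen : IsOpen (PrimeSpectrum.comap (algebraMap R C) '' PrimeSpectrum.basicOpen c) :=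
    PrimeSpectrum.isOpenMap_comap_of_hasGoingDown_of_finitePresentation _
      (PrimeSpectrum.basicOpen c).isOpen
  obtain ⟨y, hy⟩ : (PrimeSpectrum.basicOpen c : Set (PrimeSpectrum C)).Nonempty := by
    rw [← TopologicalSpace.Opens.ne_bot_iff_nonempty, ne_eq, PrimeSpectrum.basicOpen_eq_bot_iff]
    exact fun h => hc0 h.eq_zero
  obtain ⟨_, ⟨_, ⟨g, rfl⟩, rfl⟩, hyg, hg⟩ :=
    PrimeSpectrum.isBasis_basic_opens.exists_subset_of_mem_open (Set.mem_image_of_mem _ hy) hopen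
  have hg0 : g ∉ separableJacobson k (⊥ : Ideal R) := by
    rw [hR, Ideal.mem_bot]
    rintro rfl
    simp at hyg
  obtain ⟨m, hm, hsep, hgm⟩ :
      ∃ m : Ideal R, m.IsMaximal ∧ Algebra.IsSeparable k (R ⧸ m) ∧ g ∉ m := by
    simpa [separableJacobson, Submodule.mem_sInf] using hg0
  obtain ⟨q, hcq, hqm⟩ := hg (show (⟨m, hm.isPrime⟩ : PrimeSpectrum R) ∈ _ from hgm)
  have : q.asIdeal.LiesOver m := ⟨congrArg PrimeSpectrum.asIdeal hqm.symm⟩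
  have ⟨hq, hqsep⟩ := isMaximal_and_isSeparable_quotient_of_liesOver (k := k) m q.asIdeal
  exact hcq (Submodule.mem_sInf.mp hc q.asIdeal ⟨hq, bot_le, hqsep⟩)

theorem separableJacobson_bot_eq_bot_of_isSmoothAt_bot [IsDomain B]
    [Algebra.FinitePresentation k B] [Algebra.IsSmoothAt k (⊥ : Ideal B)] :
    separableJacobson k (⊥ : Ideal B) = ⊥ := by
  obtain ⟨f, hf, d, _, _, _⟩ :=
    Algebra.IsSmoothAt.exists_isStandardEtale_mvPolynomial (R := k) (p := (⊥ : Ideal B))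
  have hpow : Submonoid.powers f ≤ nonZeroDivisors B :=
    powers_le_nonZeroDivisors_of_noZeroDivisors hf
  have : IsDomain (Localization.Away f) := IsLocalization.isDomain_localization hpow
  exact separableJacobson_bot_eq_bot_of_injective
    (IsScalarTower.toAlgHom k B (Localization.Away f)) (IsLocalization.injective _ hpow)
    (separableJacobson_bot_eq_bot_of_etale (separableJacobson_bot_mvPolynomial (Fin d)))

theorem isSmoothAt_bot_of_formallySmooth_fractionRing [IsDomain B] (K : Type*) [Field K]
    [Algebra B K] [IsFractionRing B K] [Algebra k K] [IsScalarTower k B K]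
    [Algebra.FormallySmooth k K] : Algebra.IsSmoothAt k (⊥ : Ideal B) := by
  have : IsLocalization (⊥ : Ideal B).primeCompl K := by
    rw [Ideal.primeCompl_bot]
    infer_instance
  exact .of_equiv ((IsLocalization.algEquiv (⊥ : Ideal B).primeCompl K
    (Localization.AtPrime (⊥ : Ideal B))).restrictScalars k)

end Smooth

section GeometricallyReduced

theorem isGeometricallyReduced_of_isSeparable (k L : Type*) [Field k] [CommRing L] [IsDomain L]
    [Algebra k L] [Algebra.IsSeparable k L] : Algebra.IsGeometricallyReduced k L := by
  refine Algebra.IsGeometricallyReduced.of_forall_fg fun S hS => ?_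
  have : Algebra.IsSeparable k S :=
    S.isSeparable_iff.mpr fun x _ => Algebra.IsSeparable.isSeparable k x
  have : Algebra.IsIntegral k S := ⟨Algebra.IsSeparable.isIntegral k⟩
  have : Algebra.FiniteType k S := S.fg_iff_finiteType.mp hS
  let := (isField_of_isIntegral_of_isField' (S := S) (Field.toIsField k)).toField
  have : Algebra.FormallyUnramified k S := .of_isSeparable k S
  exact (Algebra.isGeometricallyReduced_field_iff k S).mpr
    (Algebra.FormallyUnramified.isReduced_of_field (AlgebraicClosure k) _)

theorem isReduced_tensorProduct_of_iInf_eq_bot {R B S ι : Type*} [CommRing R] [CommRing B]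
    [CommRing S] [Algebra R B] [Algebra R S] [Module.Free R S] {I : ι → Ideal B}
    (hI : ⨅ i, I i = ⊥) (h : ∀ i, IsReduced (S ⊗[R] (B ⧸ I i))) : IsReduced (S ⊗[R] B) := by
  classical
  let e := Module.Free.chooseBasis R S
  let toQuot (i) : S ⊗[R] B →ₐ[R] S ⊗[R] (B ⧸ I i) :=
    Algebra.TensorProduct.map (.id R S) (Ideal.Quotient.mkₐ R (I i))
  have hcoord (i) (z : S ⊗[R] B) (j) : TensorProduct.equivFinsuppOfBasisLeft e (toQuot i z) j =
      Ideal.Quotient.mk (I i) (TensorProduct.equivFinsuppOfBasisLeft e z j) := by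
    induction z with
    | zero => simp
    | add x y hx hy => simp [hx, hy]
    | tmul x y => simp [toQuot, Algebra.smul_def]
  refine ⟨fun z hz => (TensorProduct.equivFinsuppOfBasisLeft e).map_eq_zero_iff.mp ?_⟩
  ext j
  refine (Submodule.mem_bot B).mp (hI ▸ (Submodule.mem_iInf _).mpr fun i => ?_)
  rw [← Ideal.Quotient.eq_zero_iff_mem, ← hcoord, (hz.map (toQuot i)).eq_zero, map_zero,
    Finsupp.zero_apply]

variable {k B : Type*} [Field k] [CommRing B] [Algebra k B]

theorem isGeometricallyReduced_of_separableJacobson_bot_eq_bot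
    (hB : separableJacobson k (⊥ : Ideal B) = ⊥) : Algebra.IsGeometricallyReduced k B := by
  rw [separableJacobson, sInf_eq_iInf'] at hB
  refine (Algebra.isGeometricallyReduced_field_iff k B).mpr
    (isReduced_tensorProduct_of_iInf_eq_bot hB fun ⟨m, hm, _, _⟩ => ?_)
  exact (Algebra.isGeometricallyReduced_field_iff k (B ⧸ m)).mp
    (isGeometricallyReduced_of_isSeparable k (B ⧸ m))

theorem isGeometricallyReduced_of_isLocalization (M : Submonoid B) (S : Type*) [CommRing S]
    [Algebra B S] [IsLocalization M S] [Algebra k S] [IsScalarTower k B S]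
    [Algebra.IsGeometricallyReduced k B] : Algebra.IsGeometricallyReduced k S := by
  let Ω := AlgebraicClosure k
  let φ := Algebra.TensorProduct.map (.id Ω Ω) (IsScalarTower.toAlgHom k B S)
  let := φ.toAlgebra
  have : IsScalarTower Ω (Ω ⊗[k] B) (Ω ⊗[k] S) := .of_algebraMap_eq' φ.comp_algebraMap.symm
  have := IsLocalization.tensorProduct_tensorProduct_right k Ω M S
    (by ext b; simp [RingHom.algebraMap_toAlgebra, φ])
  have : IsReduced (Ω ⊗[k] B) := (Algebra.isGeometricallyReduced_field_iff k B).mp inferInstance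
  let N := M.map (Algebra.TensorProduct.includeRight (R := k) (A := Ω))
  exact (Algebra.isGeometricallyReduced_field_iff k S).mpr <| isReduced_of_injective
    (IsLocalization.algEquiv N (Ω ⊗[k] S) (Localization N)) (AlgEquiv.injective _)

theorem linearIndependent_pow_expChar_of_isGeometricallyReduced [Nontrivial B]
    [Algebra.IsGeometricallyReduced k B] (p : ℕ) [ExpChar k p] {ι : Type*} {v : ι → B}
    (hv : LinearIndependent k v) : LinearIndependent k fun i => v i ^ p := by
  let Ω := AlgebraicClosure k
  have : ExpChar (Ω ⊗[k] B) p := expChar_of_injective_algebraMap (algebraMap k _).injective p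
  rw [linearIndependent_iff']
  intro s c hc i hi
  choose d hd using fun i => IsAlgClosed.exists_pow_nat_eq (algebraMap k Ω (c i)) (expChar_pos k p)
  -- The relation becomes the `p`-th power of `∑ d i ⊗ v i`, which vanishes as `Ω ⊗ B` is reduced.
  have hpow : (∑ i ∈ s, d i ⊗ₜ[k] v i) ^ p = 0 := calc
    (∑ i ∈ s, d i ⊗ₜ[k] v i) ^ p = ∑ i ∈ s, algebraMap k Ω (c i) ⊗ₜ[k] (v i ^ p) := by
      simp only [sum_pow_char, Algebra.TensorProduct.tmul_pow, hd]
    _ = 1 ⊗ₜ[k] ∑ i ∈ s, c i • v i ^ p := by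
      simp [TensorProduct.tmul_sum, Algebra.algebraMap_eq_smul_one, TensorProduct.smul_tmul]
    _ = 0 := by rw [hc, TensorProduct.tmul_zero]
  have hΩ : LinearIndependent Ω fun i => (1 : Ω) ⊗ₜ[k] v i :=
    Module.Flat.linearIndependent_one_tmul hv
  have hsum : ∑ i ∈ s, d i • (1 : Ω) ⊗ₜ[k] v i = 0 := by
    simpa [TensorProduct.smul_tmul'] using eq_zero_of_pow_eq_zero hpow
  have hdi : d i = 0 := linearIndependent_iff'.mp hΩ s d hsum i hi
  rw [← map_eq_zero (algebraMap k Ω), ← hd i, hdi, zero_pow (expChar_pos k p).ne']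

theorem formallySmooth_of_isGeometricallyReduced (k K : Type*) [Field k] [Field K] [Algebra k K]
    [Algebra.EssFiniteType k K] [Algebra.IsGeometricallyReduced k K] :
    Algebra.FormallySmooth k K := by
  obtain _ | ⟨p, hp, _⟩ := CharP.exists' k
  · infer_instance
  have : ExpChar k p := .prime hp.out
  have hpow (s : Finset K) (hs : LinearIndepOn k _root_.id (s : Set K)) :
      LinearIndepOn k (· ^ p) (s : Set K) :=
    linearIndependent_pow_expChar_of_isGeometricallyReduced p hs
  obtain ⟨s, hs, hsep⟩ :=
    exists_isTranscendenceBasis_and_isSeparable_of_linearIndepOn_pow_of_essFiniteType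
      (k := k) (K := K) p hp.out hpow
  have : Algebra.IsSeparable
      (IntermediateField.adjoin k (Set.range ((↑) : s → K))) K := by
    convert! hsep <;> simp
  exact .of_algebraicIndependent_of_isSeparable hs.1

end GeometricallyReduced

theorem formallySmooth_fractionRing_iff_separableJacobson_bot_eq_bot {k B K : Type*} [Field k]
    [CommRing B] [IsDomain B] [Algebra k B] [Algebra.FiniteType k B] [Field K] [Algebra B K]
    [IsFractionRing B K] [Algebra k K] [IsScalarTower k B K] :
    Algebra.FormallySmooth k K ↔ separableJacobson k (⊥ : Ideal B) = ⊥ where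
  mp _ := by
    have : Algebra.FinitePresentation k B := Algebra.FinitePresentation.of_finiteType.mp ‹_›
    have : Algebra.IsSmoothAt k (⊥ : Ideal B) := isSmoothAt_bot_of_formallySmooth_fractionRing K
    exact separableJacobson_bot_eq_bot_of_isSmoothAt_bot
  mpr hB := by
    have : Algebra.IsGeometricallyReduced k B :=
      isGeometricallyReduced_of_separableJacobson_bot_eq_bot hB
    have : Algebra.IsGeometricallyReduced k K :=
      isGeometricallyReduced_of_isLocalization (nonZeroDivisors B) K
    have : Algebra.EssFiniteType B K := .of_isLocalization _ (nonZeroDivisors B)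
    have : Algebra.EssFiniteType k K := .comp k B K
    exact formallySmooth_of_isGeometricallyReduced k K

theorem residueField_formallySmooth_iff_eq_sInf_separable_maximal_general {k A κ : Type*}
    [Field k] [CommRing A] [Algebra k A] [Algebra.FiniteType k A] (p : Ideal A) [p.IsPrime]
    [Field κ] [Algebra (A ⧸ p) κ] [IsFractionRing (A ⧸ p) κ] [Algebra k κ]
    [IsScalarTower k (A ⧸ p) κ] :
    Algebra.FormallySmooth k κ ↔
      p = sInf {m : Ideal A | m.IsMaximal ∧ p ≤ m ∧ Algebra.IsSeparable k (A ⧸ m)} :=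
  formallySmooth_fractionRing_iff_separableJacobson_bot_eq_bot.trans
    (eq_separableJacobson_iff p).symm

/-- Let `k` be a field, `A = k[x₁,…,xₙ]` and `𝔭` a prime of `A` with residue
field `k(𝔭)` (realized as any fraction field `κ` of `A/𝔭`).  Then `k(𝔭)` is formally smooth
over `k` iff `𝔭` is the intersection of all maximal ideals `𝔪 ⊇ 𝔭` of `A` whose residue field
`A/𝔪` is separable over `k`. -/
theorem residueField_formallySmooth_iff_eq_sInf_separable_maximal
    (k : Type u) [Field k] (n : ℕ)
    (p : Ideal (MvPolynomial (Fin n) k)) [p.IsPrime]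
    (κ : Type u) [Field κ] [Algebra (MvPolynomial (Fin n) k ⧸ p) κ]
    [IsFractionRing (MvPolynomial (Fin n) k ⧸ p) κ]
    [Algebra k κ] [IsScalarTower k (MvPolynomial (Fin n) k ⧸ p) κ] :
    Algebra.FormallySmooth k κ ↔
      p = sInf {m : Ideal (MvPolynomial (Fin n) k) |
        m.IsMaximal ∧ p ≤ m ∧ Algebra.IsSeparable k (MvPolynomial (Fin n) k ⧸ m)} :=
  residueField_formallySmooth_iff_eq_sInf_separable_maximal_general p
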